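/- Let Z_1, …, Z_n be independent real-valued random variables, each bounded above by 1 almost surely, and let Λ = {λ_1, …, λ_k} be a finite grid with λ_i ∈ (0, 1/2] for all i. Then for any δ ∈ (0,1), the probability that (1/n) Σ_{i=1}^n E[Z_i] ≥ (1/n) Σ_{i=1}^n Z_i + min_{λ∈Λ} ( (λ/n) Σ_{i=1}^n Z_i² + ln(k/δ)/(λn) ) is at most δ. (Unexpected Bernstein inequality.) -/

import Mathlib

open MeasureTheory ProbabilityTheory

lemma ub_exp_le (x : ℝ) (hx : -(1/2) ≤ x) : Real.exp (x - x ^ 2) ≤ 1 + x := by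
  rcases le_total 0 x with h | h
  · rw [← Real.le_log_iff_exp_le (by linarith)]
    refine le_trans ?_ (Real.le_log_one_add_of_nonneg h)
    rw [le_div_iff₀ (by linarith)]
    nlinarith [pow_nonneg h 2, pow_nonneg h 3]
  · obtain ⟨y, rfl⟩ : ∃ y, x = -y := ⟨-x, by ring⟩
    have hy : 0 ≤ y := by linarith
    have hy2 : y ≤ 1/2 := by linarith
    have h1 := Real.quadratic_le_exp_of_nonneg (x := y + y ^ 2) (by positivity)
    have h2 : -y - (-y) ^ 2 = -(y + y ^ 2) := by ring
    rw [h2, Real.exp_neg]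
    rw [inv_le_comm₀ (Real.exp_pos _) (by linarith)]
    refine le_trans ?_ h1
    rw [inv_le_iff_one_le_mul₀ (by linarith)]
    have h3 : 0 ≤ 1 - y - y ^ 2 - y ^ 3 := by
      have a : y ^ 2 ≤ 1/4 := by nlinarith
      have b : y ^ 3 ≤ 1/8 := by nlinarith
      linarith
    nlinarith [mul_nonneg (pow_nonneg hy 2) h3]

lemma ub_single {Ω : Type*} [MeasurableSpace Ω] (μ : Measure Ω) [IsProbabilityMeasure μ]
    (Z : Ω → ℝ) (hZle : ∀ᵐ ω ∂μ, Z ω ≤ 1) (hZint : Integrable Z μ)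
    (l : ℝ) (hl : 0 < l) (hl2 : l ≤ 1/2) (m : ℝ) (hm : m = ∫ ω, Z ω ∂μ) :
    ∫⁻ ω, ENNReal.ofReal (Real.exp (l * (m - Z ω) - l ^ 2 * Z ω ^ 2)) ∂μ ≤ 1 := by
  have hlz : ∀ᵐ ω ∂μ, l * Z ω ≤ 1/2 := by
    filter_upwards [hZle] with ω h
    nlinarith
  have hint : Integrable (fun ω => Real.exp (l * m) * (1 - l * Z ω)) μ :=
    ((integrable_const 1).sub (hZint.const_mul l)).const_mul _
  calc _ ≤ ∫⁻ ω, ENNReal.ofReal (Real.exp (l * m) * (1 - l * Z ω)) ∂μ := by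
        refine lintegral_mono_ae ?_
        filter_upwards [hlz] with ω h
        refine ENNReal.ofReal_le_ofReal ?_
        have := ub_exp_le (-(l * Z ω)) (by linarith)
        have e : l * (m - Z ω) - l ^ 2 * Z ω ^ 2
            = l * m + (-(l * Z ω) - (-(l * Z ω)) ^ 2) := by ring
        rw [e, Real.exp_add]
        exact mul_le_mul_of_nonneg_left (by linarith) (Real.exp_pos _).le
    _ = ENNReal.ofReal (∫ ω, Real.exp (l * m) * (1 - l * Z ω) ∂μ) := by
        refine (ofReal_integral_eq_lintegral_ofReal hint ?_).symm
        filter_upwards [hlz] with ω h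
        exact mul_nonneg (Real.exp_pos _).le (by linarith)
    _ ≤ 1 := by
        rw [ENNReal.ofReal_le_one, integral_const_mul,
          integral_sub (integrable_const 1) (hZint.const_mul l), integral_const_mul, ← hm]
        simp only [integral_const, probReal_univ, one_smul]
        have h1 : 1 - l * m ≤ Real.exp (-(l * m)) := by
          have := Real.add_one_le_exp (-(l * m)); linarith
        calc _ ≤ Real.exp (l * m) * Real.exp (-(l * m)) :=
              mul_le_mul_of_nonneg_left h1 (Real.exp_pos _).le
          _ = 1 := by rw [← Real.exp_add]; simp

/-- **Unexpected Bernstein inequality.** Let `Z_1, …, Z_n` be independent random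
variables, each bounded above by 1 almost surely, and let `Λ = {λ_1, …, λ_k}` be a
finite grid with `λᵢ ∈ (0, 1/2]`. Then for any `δ ∈ (0,1)`, with probability at most
`δ`, `(1/n) Σᵢ E[Zᵢ] ≥ (1/n) Σᵢ Zᵢ + min_{λ∈Λ} ((λ/n) Σᵢ Zᵢ² + ln(k/δ)/(λn))`. -/
theorem unexpected_bernstein
    {Ω : Type*} [MeasurableSpace Ω] (μ : Measure Ω) [IsProbabilityMeasure μ]
    (n : ℕ) (hn : 0 < n) (Z : Fin n → Ω → ℝ)
    (hZmeas : ∀ i, Measurable (Z i))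
    (hindep : iIndepFun Z μ)
    (hZle : ∀ i, ∀ᵐ ω ∂μ, Z i ω ≤ 1)
    (hZint : ∀ i, Integrable (Z i) μ)
    (Λ : Finset ℝ) (hΛne : Λ.Nonempty) (hΛ : ∀ lam ∈ Λ, lam ∈ Set.Ioc (0 : ℝ) (1/2))
    (δ : ℝ) (hδ : δ ∈ Set.Ioo (0 : ℝ) 1) :
    μ {ω | (n : ℝ)⁻¹ * ∑ i, (∫ ω', Z i ω' ∂μ) ≥
        (n : ℝ)⁻¹ * ∑ i, Z i ω
          + Λ.inf' hΛne (fun lam => lam / n * ∑ i, Z i ω ^ 2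
              + Real.log (Λ.card / δ) / (lam * n))} ≤ ENNReal.ofReal δ := by
  have hk : (0 : ℝ) < Λ.card := by exact_mod_cast hΛne.card_pos
  have hn' : (0 : ℝ) < n := by exact_mod_cast hn
  obtain ⟨hδ0, hδ1⟩ := hδ
  set m : Fin n → ℝ := fun i => ∫ ω', Z i ω' ∂μ with hm
  let G : ℝ → Fin n → Ω → ENNReal := fun l i ω =>
    ENNReal.ofReal (Real.exp (l * (m i - Z i ω) - l ^ 2 * Z i ω ^ 2))
  have hGm : ∀ l i, Measurable (G l i) := by
    intro l i
    have := hZmeas i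
    fun_prop
  have hG : ∀ l ∈ Λ, ∫⁻ ω, ∏ i, G l i ω ∂μ ≤ 1 := by
    intro l hl
    have hind : iIndepFun (G l) μ :=
      hindep.comp (fun i z => ENNReal.ofReal (Real.exp (l * (m i - z) - l ^ 2 * z ^ 2)))
        (fun i => by fun_prop)
    rw [lintegral_prod_eq_prod_lintegral_of_indepFun Finset.univ (G l) hind (hGm l)]
    exact Finset.prod_le_one' fun i _ =>
      ub_single μ (Z i) (hZle i) (hZint i) l (hΛ l hl).1 (hΛ l hl).2 (m i) rfl
  have hmk : ∀ l ∈ Λ, μ {ω | ENNReal.ofReal (Λ.card / δ) ≤ ∏ i, G l i ω}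
      ≤ ENNReal.ofReal (δ / Λ.card) := by
    intro l hl
    have h := (mul_meas_ge_le_lintegral (μ := μ)
      (Finset.measurable_prod Finset.univ fun i _ => hGm l i)
      (ENNReal.ofReal (Λ.card / δ))).trans (hG l hl)
    rw [show δ / (Λ.card : ℝ) = (Λ.card / δ)⁻¹ from (inv_div _ _).symm,
      ENNReal.ofReal_inv_of_pos (by positivity)]
    rw [mul_comm] at h
    have := ENNReal.le_div_iff_mul_le (a := μ {ω | ENNReal.ofReal (Λ.card / δ) ≤ ∏ i, G l i ω})
      (b := ENNReal.ofReal (Λ.card / δ)) (c := 1)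
      (Or.inr (by simp)) (Or.inr (by simp))
    rw [one_div] at this
    exact this.2 h
  calc _ ≤ μ (⋃ l ∈ Λ, {ω | ENNReal.ofReal (Λ.card / δ) ≤ ∏ i, G l i ω}) := by
        refine measure_mono ?_
        intro ω hω
        simp only [Set.mem_setOf_eq] at hω
        obtain ⟨l, hl, he⟩ := Finset.exists_mem_eq_inf' hΛne
          (fun lam => lam / n * ∑ i, Z i ω ^ 2 + Real.log (Λ.card / δ) / (lam * n))
        rw [he] at hω
        simp only [Set.mem_iUnion, Set.mem_setOf_eq]
        refine ⟨l, hl, ?_⟩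
        have hl0 := (hΛ l hl).1
        rw [← ENNReal.ofReal_prod_of_nonneg (fun i _ => (Real.exp_pos _).le)]
        refine ENNReal.ofReal_le_ofReal ?_
        rw [← Real.exp_sum, ← Real.log_le_iff_le_exp (by positivity)]
        rw [Finset.sum_sub_distrib, ← Finset.mul_sum, ← Finset.mul_sum, Finset.sum_sub_distrib]
        have h2 := mul_le_mul_of_nonneg_left hω (mul_pos hl0 hn').le
        have e1 : l * n * ((n : ℝ)⁻¹ * ∑ i, Z i ω
            + (l / n * ∑ i, Z i ω ^ 2 + Real.log (Λ.card / δ) / (l * n)))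
            = l * ∑ i, Z i ω + l ^ 2 * ∑ i, Z i ω ^ 2 + Real.log (Λ.card / δ) := by
          field_simp
          try ring
        have e2 : l * n * ((n : ℝ)⁻¹ * ∑ i, m i) = l * ∑ i, m i := by
          field_simp
        rw [e1, e2] at h2
        linarith
    _ ≤ ∑ l ∈ Λ, μ {ω | ENNReal.ofReal (Λ.card / δ) ≤ ∏ i, G l i ω} :=
        measure_biUnion_finset_le _ _
    _ ≤ ∑ l ∈ Λ, ENNReal.ofReal (δ / Λ.card) := Finset.sum_le_sum hmk
    _ = ENNReal.ofReal δ := by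
        rw [← ENNReal.ofReal_sum_of_nonneg (fun _ _ => by positivity)]
        simp only [Finset.sum_const, nsmul_eq_mul]
        congr 1
        field_simp
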